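/- arXiv:1012.1797 — 3 statements merged into one kernel-verified Lean document; each statement's English description precedes it below -/
import Mathlib

section
/- Let k ≥ 1, n ≥ 1 and N ≥ n be integers. For every γ ∈ J_k^{reg}(1,n), the set S_γ = {Ψ ∈ J_k(n,N) : Ψ ∘ γ = 0} is a linear subspace of J_k(n,N) of codimension kN. -/
open scoped BigOperators

namespace JetPaper

/-- Monomials in `u` variables of degree between `1` and `k`:
these index a basis of `⊕_{j=1}^k Sym^j ℂ^u`. -/
def Mon (u k : ℕ) : Type := {m : Fin u → ℕ // 0 < ∑ i, m i ∧ ∑ i, m i ≤ k}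

noncomputable instance (u k : ℕ) : Fintype (Mon u k) :=
  Fintype.ofInjective
    (fun m : Mon u k => (fun i => (⟨m.1 i, Nat.lt_succ_of_le
        ((Finset.single_le_sum (fun _ _ => Nat.zero_le _) (Finset.mem_univ i)).trans
          m.2.2)⟩ : Fin (k + 1))))
    (fun m m' h => Subtype.ext (funext fun i => congrArg Fin.val (congrFun h i)))

/-- The space `J_k(u,v)` of `k`-jets at the origin of holomorphic maps `(ℂ^u,0) → (ℂ^v,0)`,
described by the coefficients (indexed by monomials of degree `1,…,k` in `u` variables)
of the `v` coordinate polynomials. -/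
abbrev Jet (k u v : ℕ) : Type := Fin v → Mon u k → ℂ

/-- The tuple of coordinate polynomials of a jet. -/
noncomputable def toPoly {k u v : ℕ} (γ : Jet k u v) : Fin v → MvPolynomial (Fin u) ℂ :=
  fun i => ∑ m : Mon u k, MvPolynomial.monomial (Finsupp.equivFunOnFinite.symm m.1) (γ i m)

/-- Composition of jets `Ψ ∘ γ`: substitution of the coordinate polynomials of `γ` into
those of `Ψ`, followed by deletion of all terms of degree greater than `k`
(only the coefficients of monomials of degree `1,…,k` are recorded). -/
noncomputable def jetComp {k u v w : ℕ} (Ψ : Jet k v w) (γ : Jet k u v) : Jet k u w :=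
  fun i m => MvPolynomial.coeff (Finsupp.equivFunOnFinite.symm m.1)
    (MvPolynomial.aeval (toPoly γ) (toPoly Ψ i))

/-- The linear part of a jet, as a matrix. -/
noncomputable def linPart {k u v : ℕ} (γ : Jet k u v) : Matrix (Fin v) (Fin u) ℂ :=
  fun i j => MvPolynomial.coeff (Finsupp.single j 1) (toPoly γ i)

/-- The coefficient matrix of composition with `γ`. -/
noncomputable def compMat {k n : ℕ} (γ : Jet k 1 n) : Matrix (Mon 1 k) (Mon n k) ℂ :=
  fun m m' => MvPolynomial.coeff (Finsupp.equivFunOnFinite.symm m.1)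
    (∏ s, toPoly γ s ^ m'.1 s)

lemma jetComp_eq {k n N : ℕ} (γ : Jet k 1 n) (Ψ : Jet k n N) (i : Fin N) :
    jetComp Ψ γ i = (compMat γ).mulVec (Ψ i) := by
  funext m
  simp only [jetComp, Matrix.mulVec, dotProduct, compMat]
  rw [toPoly, map_sum, MvPolynomial.coeff_sum]
  refine Finset.sum_congr rfl fun m' _ => ?_
  rw [MvPolynomial.aeval_monomial, Finsupp.prod_fintype _ _ (by simp),
    MvPolynomial.algebraMap_eq, MvPolynomial.coeff_C_mul, mul_comm]
  rfl

/-- The monomials in one variable. -/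
def monEquiv (k : ℕ) : Fin k ≃ Mon 1 k where
  toFun j := ⟨fun _ => j.1 + 1, by simp, by simpa using j.2⟩
  invFun m := ⟨m.1 0 - 1, by have := m.2; simp at this; omega⟩
  left_inv j := by simp
  right_inv m := by
    apply Subtype.ext
    funext i
    have := m.2
    simp at this
    have hi : i = 0 := Subsingleton.elim _ _
    subst hi
    simp
    omega

/-- The power of a single variable. -/
def monSingle {n : ℕ} (k : ℕ) (i : Fin n) (j : Fin k) : Mon n k :=
  ⟨Pi.single i (j.1 + 1), by simp, by simpa using j.2⟩

lemma dvd_toPoly {k n : ℕ} (γ : Jet k 1 n) (i : Fin n) :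
    (MvPolynomial.X 0 : MvPolynomial (Fin 1) ℂ) ∣ toPoly γ i := by
  refine Finset.dvd_sum fun m _ => ?_
  rw [MvPolynomial.X_dvd_monomial]
  right
  have := m.2
  simp at this
  simp
  omega

lemma coeff_pow_aux (q : MvPolynomial (Fin 1) ℂ) (a b : ℕ) :
    MvPolynomial.coeff (Finsupp.single 0 a) ((MvPolynomial.X 0 * q) ^ b) =
      if b ≤ a then MvPolynomial.coeff (Finsupp.single 0 (a - b)) (q ^ b) else 0 := by
  rw [mul_pow, MvPolynomial.X_pow_eq_monomial, MvPolynomial.coeff_monomial_mul']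
  by_cases h : b ≤ a
  · simp [h, ← Finsupp.single_tsub]
  · simp [h]

lemma compMat_surj {k n : ℕ} (γ : Jet k 1 n) (hγ : linPart γ ≠ 0) :
    Function.Surjective (compMat γ).mulVec := by
  obtain ⟨i, hi⟩ : ∃ i, linPart γ i 0 ≠ 0 := by
    by_contra! h
    apply hγ
    ext i j
    have hj : j = 0 := Subsingleton.elim _ _
    subst hj
    exact h i
  obtain ⟨q, hq⟩ := dvd_toPoly γ i
  have hq0 : MvPolynomial.coeff 0 q ≠ 0 := by
    have h1 := coeff_pow_aux q 1 1
    rw [pow_one, ← hq] at h1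
    simp at h1
    rw [linPart, h1] at hi
    simpa using hi
  let M : Matrix (Fin k) (Fin k) ℂ := (compMat γ).submatrix (monEquiv k) (monSingle k i)
  have hM : ∀ a b, M a b = if b.1 ≤ a.1 then
      MvPolynomial.coeff (Finsupp.single 0 (a.1 - b.1)) (q ^ (b.1 + 1)) else 0 := by
    intro a b
    have h := coeff_pow_aux q (a.1 + 1) (b.1 + 1)
    simp only [add_le_add_iff_right, Nat.add_sub_add_right] at h
    rw [← h, ← hq]
    simp only [M, Matrix.submatrix_apply, compMat, monSingle, monEquiv, Equiv.coe_fn_mk]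
    rw [Finset.prod_eq_single i]
    · congr 1
      · refine Finsupp.ext fun j => ?_
        have hj : j = 0 := Subsingleton.elim _ _
        subst hj
        simp
        rfl
      · simp
    · intro s _ hs
      simp [hs]
    · simp
  have hdet : IsUnit M.det := by
    rw [Matrix.det_of_lowerTriangular M, isUnit_iff_ne_zero, Finset.prod_ne_zero_iff]
    · intro a _
      rw [hM]
      simp only [le_refl, if_true, Nat.sub_self, Finsupp.single_zero]
      rw [← MvPolynomial.constantCoeff_eq, map_pow, MvPolynomial.constantCoeff_eq]
      exact pow_ne_zero _ hq0
    · intro a b hab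
      rw [hM, if_neg]
      have : a < b := hab
      omega
  intro y
  classical
  have hMu : IsUnit M := (Matrix.isUnit_iff_isUnit_det M).2 hdet
  obtain ⟨c, hc⟩ := (Matrix.mulVec_surjective_iff_isUnit.2 hMu) (y ∘ monEquiv k)
  refine ⟨∑ j, Pi.single (monSingle k i j) (c j), ?_⟩
  funext m
  obtain ⟨a, rfl⟩ := (monEquiv k).surjective m
  have := congrFun hc a
  simp only [Function.comp] at this
  rw [← this, Matrix.mulVec_sum]
  simp [Matrix.mulVec, dotProduct, M, Finset.sum_apply, mul_comm]

/-- Composition with `γ` as a linear map. -/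
noncomputable def compLin {k n : ℕ} (N : ℕ) (γ : Jet k 1 n) : Jet k n N →ₗ[ℂ] Jet k 1 N :=
  LinearMap.pi fun i => (compMat γ).mulVecLin ∘ₗ LinearMap.proj i

lemma compLin_apply {k n N : ℕ} (γ : Jet k 1 n) (Ψ : Jet k n N) :
    compLin N γ Ψ = jetComp Ψ γ := by
  funext i
  rw [jetComp_eq]
  rfl

/-- For `γ ∈ J_k^{reg}(1,n)`, the set
`S_γ = {Ψ ∈ J_k(n,N) : Ψ ∘ γ = 0}` is a linear subspace of `J_k(n,N)` of codimension `kN`. -/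
theorem codim_solution_space (k n N : ℕ) (hk : 1 ≤ k) (hn : 1 ≤ n) (hN : n ≤ N)
    (γ : Jet k 1 n) (hγ : linPart γ ≠ 0) :
    ∃ S : Submodule ℂ (Jet k n N),
      (S : Set (Jet k n N)) = {Ψ : Jet k n N | jetComp Ψ γ = 0} ∧
      Module.finrank ℂ (Jet k n N ⧸ S) = k * N := by
  refine ⟨LinearMap.ker (compLin N γ), ?_, ?_⟩
  · ext Ψ
    simp [compLin_apply]
  · have hs : Function.Surjective (compLin N γ) := by
      intro y
      choose x hx using fun i => compMat_surj γ hγ (y i)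
      exact ⟨x, funext hx⟩
    rw [((compLin N γ).quotKerEquivOfSurjective hs).finrank_eq, Module.finrank_pi_fintype]
    simp [← Fintype.card_congr (monEquiv k), mul_comm]

end JetPaper
end

section
/- Let k ≥ 1, n ≥ 1 and N ≥ n be integers. For any γ ∈ J_k^{reg}(1,n), the subset S_γ ∩ J_k^o(n,N) is dense in S_γ = {Ψ ∈ J_k(n,N) : Ψ ∘ γ = 0} (with respect to the standard topology of the finite-dimensional vector space J_k(n,N)). -/
open scoped BigOperators

namespace JetPaper

/-- The dimension of the kernel of the linear part of a jet. -/
noncomputable def kerDim {k n N : ℕ} (Ψ : Jet k n N) : ℕ :=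
  Module.finrank ℂ (LinearMap.ker (Matrix.mulVecLin (linPart Ψ)))

/-- Row version of `toPoly` as a linear map. -/
noncomputable def rowT (u k : ℕ) : (Mon u k → ℂ) →ₗ[ℂ] MvPolynomial (Fin u) ℂ where
  toFun f := ∑ m : Mon u k, MvPolynomial.monomial (Finsupp.equivFunOnFinite.symm m.1) (f m)
  map_add' f g := by simp [Finset.sum_add_distrib]
  map_smul' c f := by simp [Finset.smul_sum, MvPolynomial.smul_monomial]

lemma toPoly_eq {k u v : ℕ} (γ : Jet k u v) (i : Fin v) : toPoly γ i = rowT u k (γ i) := rfl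

lemma X_pow_mem_range {u k : ℕ} (i : Fin u) (d : ℕ) (hd : 1 ≤ d) (hdk : d ≤ k) :
    (MvPolynomial.X i ^ d : MvPolynomial (Fin u) ℂ) ∈ LinearMap.range (rowT u k) := by
  classical
  let m : Mon u k := ⟨Pi.single i d, by simp; omega, by simp; omega⟩
  refine ⟨Pi.single m 1, ?_⟩
  change ∑ m' : Mon u k, _ = _
  rw [Finset.sum_eq_single m]
  · rw [MvPolynomial.X_pow_eq_monomial]
    simp only [Pi.single_eq_same]
    congr 1
    ext j
    simp [m, Finsupp.single_apply, Pi.single_apply, eq_comm]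
  · intro b _ hb
    simp [Pi.single_eq_of_ne hb]
  · simp

lemma coeff_zero_rowT {u k : ℕ} (f : Mon u k → ℂ) : MvPolynomial.coeff 0 (rowT u k f) = 0 := by
  classical
  change MvPolynomial.coeff 0 (∑ m : Mon u k, _) = _
  rw [MvPolynomial.coeff_sum]
  refine Finset.sum_eq_zero fun m _ => ?_
  rw [MvPolynomial.coeff_monomial, if_neg]
  intro h
  have h2 := m.2.1
  have h3 : m.1 = 0 := by
    funext j
    exact DFunLike.congr_fun h j
  rw [h3] at h2
  simp at h2

/-- One-variable `MvPolynomial` to `Polynomial`. -/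
noncomputable def toUni : MvPolynomial (Fin 1) ℂ →ₐ[ℂ] Polynomial ℂ :=
  MvPolynomial.aeval (fun _ => Polynomial.X)

lemma coeff_toUni (p : MvPolynomial (Fin 1) ℂ) (s : Fin 1 →₀ ℕ) :
    (toUni p).coeff (s 0) = MvPolynomial.coeff s p := by
  classical
  induction p using MvPolynomial.induction_on' with
  | monomial t a =>
    rw [toUni, MvPolynomial.aeval_monomial, MvPolynomial.coeff_monomial]
    have : (t = s) ↔ (s 0 = t 0) := by
      constructor
      · rintro rfl; rfl
      · intro h; refine Finsupp.ext fun j => ?_; rw [Subsingleton.elim j 0, h]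
    simp [this, Finsupp.prod_fintype, Polynomial.algebraMap_apply, Polynomial.coeff_X_pow]
  | add p q hp hq => simp [hp, hq]

lemma coeff_zero_aeval {n : ℕ} (g : Fin n → Polynomial ℂ) (hg : ∀ j, (g j).coeff 0 = 0)
    (P : MvPolynomial (Fin n) ℂ) :
    (MvPolynomial.aeval g P).coeff 0 = MvPolynomial.coeff 0 P := by
  induction P using MvPolynomial.induction_on with
  | C a => simp [Polynomial.algebraMap_apply]
  | add p q hp hq => simp [hp, hq]
  | mul_X p j hp =>
    classical
    rw [MvPolynomial.coeff_mul_X']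
    simp [Polynomial.mul_coeff_zero, hg]

lemma coeff_one_aeval {n : ℕ} (g : Fin n → Polynomial ℂ) (hg : ∀ j, (g j).coeff 0 = 0)
    (P : MvPolynomial (Fin n) ℂ) :
    (MvPolynomial.aeval g P).coeff 1 =
      ∑ j, MvPolynomial.coeff (Finsupp.single j 1) P * (g j).coeff 1 := by
  classical
  induction P using MvPolynomial.induction_on with
  | C a =>
    simp only [MvPolynomial.coeff_C, MvPolynomial.aeval_C, Polynomial.algebraMap_apply]
    rw [Polynomial.coeff_C]
    simp [eq_comm]
  | add p q hp hq => simp [hp, hq, add_mul, Finset.sum_add_distrib]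
  | mul_X p j hp =>
    rw [map_mul, MvPolynomial.aeval_X, Polynomial.coeff_mul,
      Finset.Nat.antidiagonal_succ]
    simp only [MvPolynomial.coeff_mul_X']
    simp [hg, coeff_zero_aeval g hg]

lemma exists_subst (g q : Polynomial ℂ) (hg0 : g.coeff 0 = 0) (hg1 : g.coeff 1 ≠ 0)
    (hq : q.coeff 0 = 0) (k : ℕ) :
    ∃ a : ℕ → ℂ, ∀ m ≤ k, (q - ∑ d ∈ Finset.range k, a d • g ^ (d + 1)).coeff m = 0 := by
  obtain ⟨h, rfl⟩ := Polynomial.X_dvd_iff.2 hg0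
  have hh : h.coeff 0 ≠ 0 := by simpa [Polynomial.coeff_X_mul] using hg1
  induction k with
  | zero => exact ⟨0, by simpa using hq⟩
  | succ k ih =>
    obtain ⟨a, ha⟩ := ih
    set r := q - ∑ d ∈ Finset.range k, a d • (Polynomial.X * h) ^ (d + 1) with hr
    refine ⟨Function.update a k (r.coeff (k + 1) / (h.coeff 0) ^ (k + 1)), fun m hm => ?_⟩
    rw [Finset.sum_range_succ, ← sub_sub]
    have : ∑ d ∈ Finset.range k, Function.update a k
        (r.coeff (k + 1) / (h.coeff 0) ^ (k + 1)) d • (Polynomial.X * h) ^ (d + 1)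
        = ∑ d ∈ Finset.range k, a d • (Polynomial.X * h) ^ (d + 1) := by
      refine Finset.sum_congr rfl fun d hd => ?_
      rw [Function.update_of_ne (by have := Finset.mem_range.1 hd; omega)]
    rw [this, ← hr, Function.update_self, Polynomial.coeff_sub, Polynomial.coeff_smul, mul_pow,
      Polynomial.coeff_X_pow_mul', smul_eq_mul]
    rcases Nat.lt_or_ge m (k + 1) with hlt | hge
    · rw [if_neg (by omega), ha m (by omega)]; simp
    · obtain rfl : m = k + 1 := by omega
      have : (h ^ (k + 1)).coeff 0 = h.coeff 0 ^ (k + 1) := by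
        simp [Polynomial.coeff_zero_eq_eval_zero]
      rw [if_pos le_rfl, Nat.sub_self, this]
      field_simp
      simp

lemma jetComp_apply {k n N : ℕ} (Ψ : Jet k n N) (γ : Jet k 1 n) (i : Fin N) (m : Mon 1 k) :
    jetComp Ψ γ i m =
      (MvPolynomial.aeval (fun j => toUni (toPoly γ j)) (rowT n k (Ψ i))).coeff (m.1 0) := by
  have h := coeff_toUni (MvPolynomial.aeval (toPoly γ) (toPoly Ψ i))
    (Finsupp.equivFunOnFinite.symm m.1)
  have h2 : toUni (MvPolynomial.aeval (toPoly γ) (toPoly Ψ i)) =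
      MvPolynomial.aeval (fun j => toUni (toPoly γ j)) (toPoly Ψ i) := by
    rw [← MvPolynomial.comp_aeval_apply]
  rw [h2] at h
  exact h.symm

lemma jetComp_add_smul {k n N : ℕ} (Ψ Φ : Jet k n N) (γ : Jet k 1 n) (t : ℂ) :
    jetComp (Ψ + t • Φ) γ = jetComp Ψ γ + t • jetComp Φ γ := by
  funext i m
  simp [jetComp_apply]

lemma linPart_add_smul {k n N : ℕ} (Ψ Φ : Jet k n N) (t : ℂ) :
    linPart (Ψ + t • Φ) = linPart Ψ + t • linPart Φ := by
  funext i j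
  simp [linPart, toPoly_eq]

lemma linPart_mulVec {k n N : ℕ} (hk : 1 ≤ k) (Ψ : Jet k n N) (γ : Jet k 1 n)
    (h : jetComp Ψ γ = 0) : (linPart Ψ).mulVec (fun j => linPart γ j 0) = 0 := by
  funext i
  let m : Mon 1 k := ⟨fun _ => 1, by simp, by simpa using hk⟩
  have h1 : jetComp Ψ γ i m = 0 := congrFun (congrFun h i) m
  rw [jetComp_apply, coeff_one_aeval] at h1
  · have : ∀ j, (toUni (toPoly γ j)).coeff 1 = linPart γ j 0 := fun j => by
      have := coeff_toUni (toPoly γ j) (Finsupp.single 0 1)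
      rw [Finsupp.single_eq_same] at this
      exact this
    simp only [this] at h1
    exact h1
  · intro j
    have := coeff_toUni (toPoly γ j) 0
    rw [toPoly_eq, coeff_zero_rowT] at this
    exact this

lemma exists_good {k n N : ℕ} (hk : 1 ≤ k) (hN : n ≤ N) (γ : Jet k 1 n) (j₀ : Fin n)
    (hj : linPart γ j₀ 0 ≠ 0) :
    ∃ Φ : Jet k n N, jetComp Φ γ = 0 ∧ ∀ x : Fin n → ℂ, x j₀ = 0 →
      ∀ i : Fin n, i ≠ j₀ → (linPart Φ).mulVec x (Fin.castLE hN i) = x i := by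
  classical
  have h0 : ∀ j, (toUni (toPoly γ j)).coeff 0 = 0 := fun j => by
    have := coeff_toUni (toPoly γ j) 0
    rw [toPoly_eq, coeff_zero_rowT] at this
    exact this
  have h1 : (toUni (toPoly γ j₀)).coeff 1 ≠ 0 := by
    have := coeff_toUni (toPoly γ j₀) (Finsupp.single 0 1)
    rw [Finsupp.single_eq_same] at this
    rw [this]; exact hj
  have key : ∀ i : Fin n, ∃ f : Mon n k → ℂ,
      (∀ m ≤ k, (MvPolynomial.aeval (fun j => toUni (toPoly γ j)) (rowT n k f)).coeff m = 0) ∧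
      ∀ j, j ≠ j₀ → MvPolynomial.coeff (Finsupp.single j 1) (rowT n k f) =
        if j = i then 1 else 0 := by
    intro i
    obtain ⟨a, ha⟩ := exists_subst _ (toUni (toPoly γ i)) (h0 j₀) h1 (h0 i) k
    have hmem : (MvPolynomial.X i - ∑ d ∈ Finset.range k, a d • MvPolynomial.X j₀ ^ (d + 1) :
        MvPolynomial (Fin n) ℂ) ∈ LinearMap.range (rowT n k) := by
      refine Submodule.sub_mem _ ?_ (Submodule.sum_mem _ fun d hd => Submodule.smul_mem _ _ ?_)
      · simpa using X_pow_mem_range (k := k) i 1 le_rfl hk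
      · exact X_pow_mem_range j₀ (d + 1) (by omega) (Finset.mem_range.1 hd)
    obtain ⟨f, hf⟩ := hmem
    refine ⟨f, fun m hm => ?_, fun j hjj => ?_⟩
    · rw [hf]
      have := ha m hm
      simpa using this
    · rw [hf, MvPolynomial.coeff_sub, MvPolynomial.coeff_sum, Finset.sum_eq_zero, sub_zero,
        MvPolynomial.coeff_X']
      · simp [Finsupp.single_left_inj, eq_comm]
      · intro d _
        rw [MvPolynomial.coeff_smul, MvPolynomial.coeff_X_pow, if_neg, smul_zero]
        intro h
        have := DFunLike.congr_fun h j
        simp [Finsupp.single_apply, hjj.symm] at this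
  choose f hf1 hf2 using key
  refine ⟨fun I => if h : I.1 < n then f ⟨I.1, h⟩ else 0, ?_, ?_⟩
  · funext I m
    rw [jetComp_apply]
    by_cases h : I.1 < n
    · simp only [h, dif_pos]
      refine hf1 _ _ ?_
      simpa using m.2.2
    · simp [h]
  · intro x hx i hi
    simp only [Matrix.mulVec, dotProduct, linPart, toPoly_eq, Fin.val_castLE, Fin.is_lt, dif_pos]
    rw [Finset.sum_eq_single i]
    · rw [hf2 _ _ hi]; simp
    · intro j _ hji
      by_cases hj0 : j = j₀
      · rw [hj0, hx, mul_zero]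
      · rw [hf2 _ _ hj0]; simp [hji]
    · simp

/-- For `γ ∈ J_k^{reg}(1,n)`, the subset `S_γ ∩ J_k^o(n,N)` is dense in
`S_γ = {Ψ ∈ J_k(n,N) : Ψ ∘ γ = 0}` (standard topology of the finite-dimensional
vector space `J_k(n,N)`). -/
theorem dense_JO_in_solution_space (k n N : ℕ) (hk : 1 ≤ k) (hn : 1 ≤ n) (hN : n ≤ N)
    (γ : Jet k 1 n) (hγ : linPart γ ≠ 0) :
    {Ψ : Jet k n N | jetComp Ψ γ = 0} ⊆
      closure ({Ψ : Jet k n N | jetComp Ψ γ = 0} ∩ {Ψ : Jet k n N | kerDim Ψ = 1}) := by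
  classical
  intro Ψ hΨ
  have hΨ' : jetComp Ψ γ = 0 := hΨ
  obtain ⟨j₀, hj⟩ : ∃ j, linPart γ j 0 ≠ 0 := by
    by_contra! h
    apply hγ
    funext j l
    rw [Subsingleton.elim l 0]
    exact h j
  obtain ⟨Φ, hΦ, hΦ'⟩ := exists_good hk hN γ j₀ hj
  -- the truncated square matrix of the linear part
  let A : Matrix (Fin n) (Fin n) ℂ :=
    fun i j => if i = j₀ then 0 else linPart Ψ (Fin.castLE hN i) j
  let T : Module.End ℂ (Fin n → ℂ) := Matrix.mulVecLin A
  have hfin : (spectrum ℂ T).Finite := Module.End.finite_spectrum T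
  have hfin2 : {t : ℂ | -t ∈ spectrum ℂ T}.Finite :=
    hfin.preimage (neg_injective.injOn)
  have hcl : (0 : ℂ) ∈ closure ({t : ℂ | -t ∈ spectrum ℂ T}ᶜ) :=
    hfin2.countable.dense_compl ℂ 0
  have hcont : Continuous fun t : ℂ => Ψ + t • Φ := by fun_prop
  have := map_mem_closure (t := {Ψ : Jet k n N | jetComp Ψ γ = 0} ∩
    {Ψ : Jet k n N | kerDim Ψ = 1}) hcont hcl ?_
  · simpa using this
  intro t ht
  have hsol : jetComp (Ψ + t • Φ) γ = 0 := by
    rw [jetComp_add_smul, hΨ', hΦ]; simp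
  refine ⟨hsol, ?_⟩
  have hinj : ∀ x : Fin n → ℂ, (linPart (Ψ + t • Φ)).mulVec x = 0 → x j₀ = 0 → x = 0 := by
    intro x hx hx0
    by_contra hne
    apply ht
    apply Module.End.HasEigenvalue.mem_spectrum
    refine Module.End.hasEigenvalue_of_hasEigenvector (x := x)
      ⟨Module.End.mem_eigenspace_iff.2 ?_, hne⟩
    funext i
    by_cases hi : i = j₀
    · subst hi
      change ∑ j, A i j * x j = _
      simp [A, hx0]
    · have h1 := congrFun hx (Fin.castLE hN i)
      rw [linPart_add_smul, Matrix.add_mulVec, Matrix.smul_mulVec, Pi.add_apply, Pi.smul_apply,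
        hΦ' x hx0 i hi] at h1
      have h2 : T x i = (linPart Ψ).mulVec x (Fin.castLE hN i) := by
        change ∑ j, A i j * x j = ∑ j, linPart Ψ (Fin.castLE hN i) j * x j
        simp [A, hi]
      rw [h2]
      simp only [smul_eq_mul, Pi.zero_apply, Pi.smul_apply] at h1 ⊢
      linear_combination h1
  have hv := linPart_mulVec hk _ γ hsol
  change Module.finrank ℂ (LinearMap.ker (Matrix.mulVecLin (linPart (Ψ + t • Φ)))) = 1
  refine (finrank_eq_one_iff_of_nonzero'
    (⟨fun j => linPart γ j 0, by simpa using hv⟩ :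
      LinearMap.ker (Matrix.mulVecLin (linPart (Ψ + t • Φ)))) ?_).2 ?_
  · intro h
    exact hj (congrFun (congrArg Subtype.val h) j₀)
  · rintro ⟨w, hw⟩
    have hw' : (linPart (Ψ + t • Φ)).mulVec w = 0 := by simpa using hw
    refine ⟨w j₀ / linPart γ j₀ 0, Subtype.ext ?_⟩
    have := hinj (w - (w j₀ / linPart γ j₀ 0) • fun j => linPart γ j 0)
      (by rw [Matrix.mulVec_sub, Matrix.mulVec_smul, hv, hw']; simp)
      (by simp [hj])
    exact (sub_eq_zero.1 this).symm

end JetPaper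
end

section
/- Let k ≥ 1, n ≥ 1 and N ≥ n be integers. For γ_1, γ_2 ∈ J_k^{reg}(1,n), one has S_{γ_1} = S_{γ_2} if and only if there exists φ ∈ J_k^{reg}(1,1) such that γ_1 = γ_2 ∘ φ. -/
open scoped BigOperators

namespace JetPaper

open MvPolynomial in
theorem coeff_toPoly {k u v : ℕ} (γ : Jet k u v) (i : Fin v) (m : Mon u k) :
    coeff (Finsupp.equivFunOnFinite.symm m.1) (toPoly γ i) = γ i m := by
  classical
  unfold toPoly
  rw [coeff_sum, Finset.sum_eq_single m]
  · simp
  · intro b _ hb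
    rw [coeff_monomial, if_neg]
    intro h
    exact hb (Subtype.ext (Finsupp.equivFunOnFinite.symm.injective h))
  · simp

open MvPolynomial in
theorem toPoly_mem {k u v : ℕ} (γ : Jet k u v) (i : Fin v) :
    toPoly γ i ∈ idealOfVars (Fin u) ℂ := by
  classical
  rw [← pow_one (idealOfVars (Fin u) ℂ), mem_pow_idealOfVars_iff']
  intro x hx
  unfold toPoly
  rw [coeff_sum]
  refine Finset.sum_eq_zero fun m _ => ?_
  rw [coeff_monomial, if_neg]
  rintro rfl
  have := m.2.1
  simp [Finsupp.degree_eq_sum] at hx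
  simp [hx] at this

open MvPolynomial in
theorem mem_iff_jet {k u : ℕ} (p : MvPolynomial (Fin u) ℂ) (hp : p ∈ idealOfVars (Fin u) ℂ) :
    p ∈ idealOfVars (Fin u) ℂ ^ (k + 1) ↔
      ∀ m : Mon u k, coeff (Finsupp.equivFunOnFinite.symm m.1) p = 0 := by
  rw [← pow_one (idealOfVars (Fin u) ℂ), mem_pow_idealOfVars_iff'] at hp
  rw [mem_pow_idealOfVars_iff']
  constructor
  · intro h m
    apply h
    have := m.2.2
    simp [Finsupp.degree_eq_sum]
    omega
  · intro h x hx
    by_cases h0 : x.degree < 1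
    · exact hp x h0
    · rw [Finsupp.degree_eq_sum] at hx h0
      have := h ⟨fun i => x i, Nat.pos_of_ne_zero fun h => h0 (by rw [h]; exact one_pos),
        Nat.le_of_lt_succ hx⟩
      convert this using 2
      ext i
      rfl

open MvPolynomial in
theorem aeval_mem {u v : ℕ} (J : Ideal (MvPolynomial (Fin u) ℂ))
    (g : Fin v → MvPolynomial (Fin u) ℂ) (hg : ∀ i, g i ∈ J) (l : ℕ)
    (p : MvPolynomial (Fin v) ℂ) (hp : p ∈ idealOfVars (Fin v) ℂ ^ l) :
    aeval g p ∈ J ^ l := by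
  have h1 : idealOfVars (Fin v) ℂ ≤ J.comap (aeval g) := by
    rw [Ideal.span_le]
    rintro _ ⟨i, rfl⟩
    simpa using hg i
  have h2 : (idealOfVars (Fin v) ℂ ^ l).map (aeval g) ≤ J ^ l := by
    rw [Ideal.map_pow]
    exact Ideal.pow_right_mono (Ideal.map_le_iff_le_comap.mpr h1) l
  exact h2 (Ideal.mem_map_of_mem _ hp)

open MvPolynomial in
theorem aeval_toPoly_mem {k u v w : ℕ} (Ψ : Jet k v w) (γ : Jet k u v) (i : Fin w) :
    aeval (toPoly γ) (toPoly Ψ i) ∈ idealOfVars (Fin u) ℂ := by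
  have := aeval_mem _ _ (toPoly_mem γ) 1 (toPoly Ψ i) (by simpa using toPoly_mem Ψ i)
  simpa using this

open MvPolynomial in
theorem jetComp_eq_iff {k u v w : ℕ} (Ψ : Jet k v w) (γ : Jet k u v) (Φ : Jet k u w) :
    jetComp Ψ γ = Φ ↔ ∀ i, aeval (toPoly γ) (toPoly Ψ i) - toPoly Φ i ∈
      idealOfVars (Fin u) ℂ ^ (k + 1) := by
  rw [funext_iff]
  refine forall_congr' fun i => ?_
  rw [mem_iff_jet _ (sub_mem (aeval_toPoly_mem _ _ _) (toPoly_mem _ _)), funext_iff]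
  refine forall_congr' fun m => ?_
  rw [coeff_sub, coeff_toPoly, sub_eq_zero]
  rfl

open MvPolynomial in
theorem aeval_sub_mem {u v : ℕ} (J : Ideal (MvPolynomial (Fin u) ℂ))
    (g h : Fin v → MvPolynomial (Fin u) ℂ) (hg : ∀ i, g i - h i ∈ J)
    (p : MvPolynomial (Fin v) ℂ) : aeval g p - aeval h p ∈ J := by
  rw [← Ideal.Quotient.eq]
  have : (Ideal.Quotient.mkₐ ℂ J).comp (aeval g) = (Ideal.Quotient.mkₐ ℂ J).comp (aeval h) := by
    ext i
    simpa using (Ideal.Quotient.eq.mpr (hg i))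
  exact DFunLike.congr_fun this p

open MvPolynomial in
theorem jetComp_assoc {k a b c d : ℕ} (Ψ : Jet k c d) (γ : Jet k b c) (φ : Jet k a b) :
    jetComp (jetComp Ψ γ) φ = jetComp Ψ (jetComp γ φ) := by
  rw [jetComp_eq_iff]
  intro i
  have h1 := aeval_mem _ _ (toPoly_mem φ) _ _ ((jetComp_eq_iff Ψ γ _).mp rfl i)
  have h2 := (jetComp_eq_iff Ψ (jetComp γ φ) _).mp rfl i
  have h3 := aeval_sub_mem _ _ _ ((jetComp_eq_iff γ φ _).mp rfl) (toPoly Ψ i)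
  have h4 : aeval (toPoly φ) (aeval (toPoly γ) (toPoly Ψ i)) =
      aeval (fun j => aeval (toPoly φ) (toPoly γ j)) (toPoly Ψ i) := by
    rw [← AlgHom.comp_apply]
    congr 1
    ext j
    simp
  rw [map_sub, h4] at h1
  have := add_mem (sub_mem h3 h1) h2
  convert this using 1
  ring

theorem toPoly_add {k u v : ℕ} (f g : Jet k u v) : toPoly (f + g) = toPoly f + toPoly g := by
  funext i
  simp [toPoly, Finset.sum_add_distrib]

theorem toPoly_smul {k u v : ℕ} (c : ℂ) (f : Jet k u v) : toPoly (c • f) = c • toPoly f := by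
  funext i
  simp [toPoly, Finset.smul_sum, MvPolynomial.smul_monomial]

/-- Composition on the right, as a linear map. -/
noncomputable def compRight {k u v : ℕ} (w : ℕ) (γ : Jet k u v) : Jet k v w →ₗ[ℂ] Jet k u w where
  toFun Ψ := jetComp Ψ γ
  map_add' f g := by
    funext i m
    simp [jetComp, toPoly_add]
  map_smul' c f := by
    funext i m
    simp [jetComp, toPoly_smul]

open MvPolynomial in
/-- The jet of the identity. -/
noncomputable def idJet (k u : ℕ) : Jet k u u :=
  fun i m => coeff (Finsupp.equivFunOnFinite.symm m.1) (X i)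

open MvPolynomial in
theorem toPoly_idJet {k u : ℕ} (hk : 1 ≤ k) (i : Fin u) : toPoly (idJet k u) i = X i := by
  classical
  have hX : (X i : MvPolynomial (Fin u) ℂ) ∈ idealOfVars (Fin u) ℂ := Ideal.subset_span ⟨i, rfl⟩
  ext m
  by_cases h : 0 < ∑ j, m j ∧ ∑ j, m j ≤ k
  · have := coeff_toPoly (idJet k u) i ⟨fun j => m j, h⟩
    have e : (Finsupp.equivFunOnFinite.symm (fun j => m j)) = m := by ext; simp
    simpa [idJet, e] using this
  · rw [coeff_X, if_neg, toPoly, coeff_sum]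
    · refine Finset.sum_eq_zero fun x _ => ?_
      rw [coeff_monomial, if_neg]
      rintro rfl
      exact h x.2
    · rintro rfl
      apply h
      simp [Finsupp.single_apply, hk]

theorem jetComp_idJet {k u v : ℕ} (hk : 1 ≤ k) (γ : Jet k u v) : jetComp γ (idJet k u) = γ := by
  rw [jetComp_eq_iff]
  intro i
  have : toPoly (idJet k u) = MvPolynomial.X := funext (toPoly_idJet hk)
  simp [this]

theorem idJet_jetComp {k u v : ℕ} (hk : 1 ≤ k) (γ : Jet k u v) : jetComp (idJet k v) γ = γ := by
  rw [jetComp_eq_iff]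
  intro i
  simp [toPoly_idJet hk]

open MvPolynomial in
theorem linPart_comp_zero {k u v w : ℕ} (hk : 1 ≤ k) (γ : Jet k v w) (φ : Jet k u v)
    (h : linPart φ = 0) : linPart (jetComp γ φ) = 0 := by
  classical
  have h1 : ∀ i, toPoly φ i ∈ idealOfVars (Fin u) ℂ ^ 2 := by
    intro i
    rw [show 2 = 1 + 1 from rfl, mem_iff_jet _ (toPoly_mem φ i)]
    intro m
    have hm : (Finsupp.equivFunOnFinite.symm m.1).degree = 1 := by
      have := m.2
      simp [Finsupp.degree_eq_sum]
      omega
    obtain ⟨j, hj⟩ : ∃ j, Finsupp.equivFunOnFinite.symm m.1 = Finsupp.single j 1 := by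
      generalize Finsupp.equivFunOnFinite.symm m.1 = x at hm
      obtain ⟨j, hj⟩ : ∃ j, x j ≠ 0 := by
        by_contra! hh
        have : x = 0 := Finsupp.ext hh
        simp [this] at hm
      have hle : Finsupp.single j 1 ≤ x := by
        rw [Finsupp.single_le_iff]
        omega
      obtain ⟨c, rfl⟩ := le_iff_exists_add.mp hle
      have hc : c.degree = 0 := by simpa using hm
      rw [Finsupp.degree_eq_zero_iff] at hc
      exact ⟨j, by rw [hc, add_zero]⟩
    rw [hj]
    exact congrFun (congrFun h i) j
  funext i j
  have h2 := aeval_mem _ _ h1 1 (toPoly γ i) (by simpa using toPoly_mem γ i)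
  rw [pow_one, mem_pow_idealOfVars_iff'] at h2
  have h3 := (jetComp_eq_iff γ φ _).mp rfl i
  rw [mem_pow_idealOfVars_iff'] at h3
  have h4 := h2 (Finsupp.single j 1) (by simp)
  have h5 := h3 (Finsupp.single j 1) (by simp; omega)
  rw [coeff_sub, h4] at h5
  simpa [linPart] using h5

open MvPolynomial in
theorem exists_factor (p : MvPolynomial (Fin 1) ℂ) (l : ℕ)
    (hp : p ∈ idealOfVars (Fin 1) ℂ ^ l) :
    ∃ r, p = X 0 ^ l * r ∧ coeff (Finsupp.single 0 l) p = constantCoeff r := by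
  have : idealOfVars (Fin 1) ℂ = Ideal.span {X 0} := by
    refine congrArg Ideal.span (Set.ext fun x => ?_)
    rw [Set.mem_range, Set.mem_singleton_iff]
    constructor
    · rintro ⟨y, rfl⟩
      rw [Subsingleton.elim y 0]
    · rintro rfl
      exact ⟨0, rfl⟩
  rw [this, Ideal.span_singleton_pow, Ideal.mem_span_singleton] at hp
  obtain ⟨r, rfl⟩ := hp
  refine ⟨r, rfl, ?_⟩
  rw [X_pow_eq_monomial]
  have := coeff_monomial_mul 0 (Finsupp.single (0 : Fin 1) l) (1 : ℂ) r
  simpa [constantCoeff_eq] using this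

open MvPolynomial in
theorem jetComp_inj {k w : ℕ} (f : Jet k 1 w) (φ : Jet k 1 1)
    (hφ : linPart φ ≠ 0) (h : jetComp f φ = 0) : f = 0 := by
  classical
  have h0 := (jetComp_eq_iff f φ _).mp h
  have hz : ∀ i, toPoly (0 : Jet k 1 w) i = 0 := by intro i; simp [toPoly]
  obtain ⟨u, hu, hu'⟩ := exists_factor (toPoly φ 0) 1 (by simpa using toPoly_mem φ 0)
  have hc : constantCoeff u ≠ 0 := by
    rw [← hu']
    intro hh
    apply hφ
    funext i j
    rw [Subsingleton.elim i 0, Subsingleton.elim j 0]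
    exact hh
  have key : ∀ i, ∀ l ≤ k + 1, toPoly f i ∈ idealOfVars (Fin 1) ℂ ^ l := by
    intro i l
    induction l with
    | zero => intro _; simp
    | succ l ih =>
      intro hl
      obtain ⟨r, hr, hr'⟩ := exists_factor _ l (ih (by omega))
      have h1 := h0 i
      rw [hz, sub_zero, hr, map_mul, map_pow, aeval_X, hu, pow_one, mul_pow, mul_assoc] at h1
      rw [mem_pow_idealOfVars_iff'] at h1
      have h2 := h1 (Finsupp.single 0 l) (by simp; omega)
      rw [X_pow_eq_monomial] at h2
      have h3 := coeff_monomial_mul 0 (Finsupp.single (0 : Fin 1) l) (1 : ℂ)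
        (u ^ l * aeval (toPoly φ) r)
      rw [add_zero, h2, one_mul, ← constantCoeff_eq, map_mul, map_pow] at h3
      have h4 : constantCoeff (aeval (toPoly φ) r) = constantCoeff r := by
        have := aeval_sub_mem (idealOfVars (Fin 1) ℂ) (toPoly φ) (fun _ => 0)
          (fun i => by simpa using toPoly_mem φ i) r
        rw [← pow_one (idealOfVars (Fin 1) ℂ), mem_pow_idealOfVars_iff'] at this
        have := this 0 (by simp)
        rw [coeff_sub, sub_eq_zero] at this
        rw [constantCoeff_eq, this, ← constantCoeff_eq]
        have e : aeval (fun _ : Fin 1 => (0 : MvPolynomial (Fin 1) ℂ)) r = C (constantCoeff r) := by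
          have := aeval_zero' (S₁ := MvPolynomial (Fin 1) ℂ) r
          simpa using this
        rw [e, constantCoeff_C]
      rw [h4] at h3
      have h5 : constantCoeff r = 0 := by
        rcases mul_eq_zero.mp h3.symm with h | h
        · exact absurd h (pow_ne_zero _ hc)
        · exact h
      rw [h5] at hr'
      have h6 := ih (by omega)
      rw [mem_pow_idealOfVars_iff'] at h6 ⊢
      intro x hx
      by_cases hxl : x.degree < l
      · exact h6 x hxl
      · have : x = Finsupp.single 0 l := by
          refine Finsupp.ext fun j => ?_
          rw [Subsingleton.elim j 0]
          simp [Finsupp.degree_eq_sum] at hx hxl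
          simp
          omega
        rw [this, hr']
  funext i m
  rw [← coeff_toPoly f i m]
  exact (mem_iff_jet _ (toPoly_mem f i)).mp (key i _ le_rfl) m

theorem exists_leftInv {k : ℕ} (φ : Jet k 1 1) (hφ : linPart φ ≠ 0) (g : Jet k 1 1) :
    ∃ ψ : Jet k 1 1, jetComp ψ φ = g := by
  have : Function.Injective (compRight 1 φ) := by
    rw [← LinearMap.ker_eq_bot, LinearMap.ker_eq_bot']
    exact fun f hf => jetComp_inj f φ hφ hf
  exact LinearMap.surjective_of_injective this g

/-- For `γ₁, γ₂ ∈ J_k^{reg}(1,n)`, one has `S_{γ₁} = S_{γ₂}` if and only if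
there exists `φ ∈ J_k^{reg}(1,1)` with `γ₁ = γ₂ ∘ φ`. -/
theorem solution_space_eq_iff (k n N : ℕ) (hk : 1 ≤ k) (hn : 1 ≤ n) (hN : n ≤ N)
    (γ₁ γ₂ : Jet k 1 n) (hγ₁ : linPart γ₁ ≠ 0) (hγ₂ : linPart γ₂ ≠ 0) :
    {Ψ : Jet k n N | jetComp Ψ γ₁ = 0} = {Ψ : Jet k n N | jetComp Ψ γ₂ = 0} ↔
      ∃ φ : Jet k 1 1, linPart φ ≠ 0 ∧ γ₁ = jetComp γ₂ φ := by
  constructor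
  · intro hS
    obtain ⟨i, hi⟩ : ∃ i, linPart γ₂ i ≠ 0 := by
      by_contra! hh
      exact hγ₂ (funext hh)
    let e : Jet k n 1 := fun _ => idJet k n i
    have he : ∀ γ : Jet k 1 n, jetComp e γ = fun _ => γ i := by
      intro γ
      funext j
      exact congrFun (idJet_jetComp hk γ) i
    have hreg : linPart (jetComp e γ₂) ≠ 0 := by
      rw [he]
      intro hh
      exact hi (congrFun hh 0)
    obtain ⟨ψ, hψ⟩ := exists_leftInv _ hreg (idJet k 1)
    let P : Jet k n n := idJet k n - jetComp γ₂ (jetComp ψ e)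
    let Ψ : Jet k n N := fun l => if h : l.1 < n then P ⟨l.1, h⟩ else 0
    have hP : ∀ γ : Jet k 1 n, jetComp P γ = γ - jetComp γ₂ (jetComp ψ (jetComp e γ)) := by
      intro γ
      have := (compRight n γ).map_sub (idJet k n) (jetComp γ₂ (jetComp ψ e))
      change jetComp P γ = jetComp (idJet k n) γ - jetComp (jetComp γ₂ (jetComp ψ e)) γ at this
      rw [this, idJet_jetComp hk, jetComp_assoc, jetComp_assoc]
    have hΨ : ∀ γ : Jet k 1 n, jetComp Ψ γ = 0 ↔ jetComp P γ = 0 := by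
      intro γ
      constructor
      · intro h
        funext j
        have h1 := congrFun h ⟨j.1, by omega⟩
        have h2 : jetComp Ψ γ ⟨j.1, by omega⟩ = jetComp P γ j := by
          funext m
          simp [jetComp, toPoly, Ψ]
        rw [← h2, h1]
        rfl
      · intro h
        funext l
        by_cases hl : l.1 < n
        · have h2 : jetComp Ψ γ l = jetComp P γ ⟨l.1, hl⟩ := by
            funext m
            simp [jetComp, toPoly, Ψ, hl]
          rw [h2, h]
          rfl
        · funext m
          simp [jetComp, toPoly, Ψ, hl]
    have h2 : Ψ ∈ {Ψ : Jet k n N | jetComp Ψ γ₂ = 0} := by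
      rw [Set.mem_ofPred_eq, hΨ, hP, hψ, jetComp_idJet hk, sub_self]
    rw [← hS, Set.mem_ofPred_eq, hΨ, hP, sub_eq_zero] at h2
    refine ⟨_, ?_, h2⟩
    intro hz
    apply hγ₁
    rw [h2]
    exact linPart_comp_zero hk _ _ hz
  · rintro ⟨φ, hφ, rfl⟩
    ext Ψ
    rw [Set.mem_ofPred_eq, Set.mem_ofPred_eq, ← jetComp_assoc]
    constructor
    · exact jetComp_inj _ _ hφ
    · intro h
      rw [h]
      exact (compRight N φ).map_zero

end JetPaper
end
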